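/- Let δ ∈ (0,1) and p > 1. For every ε > 0 there exists R₀ ≥ 0 such that for all R ≥ R₀ and all continuously differentiable ξ : ℝ → ℂⁿ with ‖ξ‖_{0,p,δ,+} + ‖ξ'‖_{0,p,δ,+} ≤ 1, one has (∫_0^∞ e^{pδt} ‖ξ(t+R)‖^p dt)^{1/p} ≤ ε. -/

import Mathlib

open MeasureTheory Set
open scoped ENNReal

/-- The weighted `L^p` norm `‖f‖_{0,p,δ,+} = (∫_0^∞ e^{pδt} ‖f t‖^p dt)^{1/p}`
on the half-line `[0,∞)`, valued in the extended nonnegative reals. -/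
noncomputable def wnormPlus (n : ℕ) (p δ : ℝ) (f : ℝ → (Fin n → ℂ)) : ℝ≥0∞ :=
  (∫⁻ t in Ioi (0:ℝ), ENNReal.ofReal (Real.exp (p * δ * t) * ‖f t‖ ^ p)) ^ (1 / p)

/-!
Since `e^{pδt} = e^{-pδR} e^{pδ(t+R)}`, the substitution `s = t + R` shows that the weighted norm of
`τ_R ξ` is `e^{-δR}` times the weighted norm of `ξ` over `[R, ∞)`. For `R ≥ 0` this is at most
`e^{-δR} ‖ξ‖_{0,p,δ,+}`, and `e^{-δR} → 0`.
-/

section ExpWeightedNorm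

open Filter Topology

variable {E : Type*} [SeminormedAddCommGroup E] {p δ R : ℝ}

/-- The weighted norm `‖f‖_{0,p,δ,+}` on the half-line for functions with values in an arbitrary
seminormed group; for values in `Fin n → ℂ` it is definitionally `wnormPlus`. No measurability of `f`
is built in: in general `∫⁻` is the lower Lebesgue integral. -/
noncomputable def expWeightedNorm (p δ : ℝ) (f : ℝ → E) : ℝ≥0∞ :=
  (∫⁻ t in Ioi (0 : ℝ), ENNReal.ofReal (Real.exp (p * δ * t) * ‖f t‖ ^ p)) ^ (1 / p)

theorem setLIntegral_Ioi_comp_add_right (F : ℝ → ℝ≥0∞) (a R : ℝ) :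
    ∫⁻ t in Ioi a, F (t + R) = ∫⁻ t in Ioi (a + R), F t := by
  simpa only [preimage_add_const_Ioi, add_sub_cancel_right] using
    (measurePreserving_add_right volume R).setLIntegral_comp_preimage_emb
      (measurableEmbedding_addRight R) F (Ioi (a + R))

theorem ofReal_exp_mul_eq_rpow_mul_ofReal_exp_add (p δ R t x : ℝ) :
    ENNReal.ofReal (Real.exp (p * δ * t) * x) =
      ENNReal.ofReal (Real.exp (-(δ * R))) ^ p *
        ENNReal.ofReal (Real.exp (p * δ * (t + R)) * x) := by
  rw [ENNReal.ofReal_rpow_of_pos (Real.exp_pos _), ← ENNReal.ofReal_mul (by positivity),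
    ← mul_assoc, ← Real.exp_mul, ← Real.exp_add]
  ring_nf

theorem expWeightedNorm_comp_add_right (hp : 0 < p) (δ R : ℝ) (f : ℝ → E) :
    expWeightedNorm p δ (fun t => f (t + R)) =
      ENNReal.ofReal (Real.exp (-(δ * R))) *
        (∫⁻ t in Ioi R, ENNReal.ofReal (Real.exp (p * δ * t) * ‖f t‖ ^ p)) ^ (1 / p) := by
  set c := ENNReal.ofReal (Real.exp (-(δ * R)))
  set F : ℝ → ℝ≥0∞ := fun t => ENNReal.ofReal (Real.exp (p * δ * t) * ‖f t‖ ^ p)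
  have hc : c ^ p ≠ ∞ := ENNReal.rpow_ne_top_of_nonneg hp.le ENNReal.ofReal_ne_top
  calc expWeightedNorm p δ (fun t => f (t + R))
      = (∫⁻ t in Ioi (0 : ℝ), c ^ p * F (t + R)) ^ (1 / p) := congrArg (· ^ (1 / p)) <|
        lintegral_congr fun t => ofReal_exp_mul_eq_rpow_mul_ofReal_exp_add p δ R t _
    _ = (c ^ p * ∫⁻ t in Ioi R, F t) ^ (1 / p) := by
        rw [lintegral_const_mul' _ _ hc, setLIntegral_Ioi_comp_add_right, zero_add]
    _ = c * (∫⁻ t in Ioi R, F t) ^ (1 / p) := by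
        rw [ENNReal.mul_rpow_of_nonneg _ _ (by positivity), one_div, ENNReal.rpow_rpow_inv hp.ne']

theorem expWeightedNorm_comp_add_right_le (hp : 0 < p) (δ : ℝ) (hR : 0 ≤ R) (f : ℝ → E) :
    expWeightedNorm p δ (fun t => f (t + R)) ≤
      ENNReal.ofReal (Real.exp (-(δ * R))) * expWeightedNorm p δ f := by
  rw [expWeightedNorm_comp_add_right hp, expWeightedNorm]
  gcongr

theorem exists_nonneg_forall_ge_exp_neg_mul_le (hδ : 0 < δ) {ε : ℝ} (hε : 0 < ε) :
    ∃ R₀ : ℝ, 0 ≤ R₀ ∧ ∀ R ≥ R₀, Real.exp (-(δ * R)) ≤ ε := by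
  have hlim : Tendsto (fun R : ℝ => Real.exp (-(δ * R))) atTop (𝓝 0) :=
    Real.tendsto_exp_neg_atTop_nhds_zero.comp (tendsto_id.const_mul_atTop hδ)
  obtain ⟨R₀, hR₀⟩ :=
    ((hlim.eventually_le_const hε).and (eventually_ge_atTop 0)).exists_forall_of_atTop
  exact ⟨R₀, (hR₀ R₀ le_rfl).2, fun R hR => (hR₀ R hR).1⟩

theorem stmt5_general (hδ : 0 < δ) (hp : 0 < p) :
    ∀ ε > (0 : ℝ), ∃ R₀ : ℝ, 0 ≤ R₀ ∧ ∀ R ≥ R₀, ∀ ξ : ℝ → E,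
      expWeightedNorm p δ ξ ≤ 1 →
        expWeightedNorm p δ (fun t => ξ (t + R)) ≤ ENNReal.ofReal ε := by
  intro ε hε
  obtain ⟨R₀, hR₀, hexp⟩ := exists_nonneg_forall_ge_exp_neg_mul_le hδ hε
  refine ⟨R₀, hR₀, fun R hR ξ hξ => ?_⟩
  calc expWeightedNorm p δ (fun t => ξ (t + R))
      ≤ ENNReal.ofReal (Real.exp (-(δ * R))) * expWeightedNorm p δ ξ :=
        expWeightedNorm_comp_add_right_le hp δ (hR₀.trans hR) ξ
    _ ≤ ENNReal.ofReal ε * 1 := mul_le_mul' (ENNReal.ofReal_le_ofReal (hexp R hR)) hξ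
    _ = ENNReal.ofReal ε := mul_one _

end ExpWeightedNorm

/-- Corollary 4.6. For `δ ∈ (0,1)` and `p > 1`: for every `ε > 0` there is
`R₀ ≥ 0` such that for all `R ≥ R₀` and all continuously differentiable `ξ : ℝ → ℂⁿ` with
`‖ξ‖_{0,p,δ,+} + ‖ξ'‖_{0,p,δ,+} ≤ 1`, one has `‖ξ ∘ τ_R‖_{0,p,δ,+} ≤ ε`;
i.e. `D(R) : ξ ↦ τ_R ξ` tends to `0` in operator norm as `R → ∞`. -/
theorem stmt5 (n : ℕ) (δ p : ℝ) (hδ : δ ∈ Ioo (0:ℝ) 1) (hp : 1 < p) :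
    ∀ ε > (0:ℝ), ∃ R₀ : ℝ, 0 ≤ R₀ ∧ ∀ R ≥ R₀,
      ∀ ξ : ℝ → (Fin n → ℂ), ContDiff ℝ 1 ξ →
        wnormPlus n p δ ξ + wnormPlus n p δ (deriv ξ) ≤ 1 →
        wnormPlus n p δ (fun t => ξ (t + R)) ≤ ENNReal.ofReal ε := by
  intro ε hε
  obtain ⟨R₀, hR₀, hsmall⟩ := stmt5_general (E := Fin n → ℂ) hδ.1 (zero_lt_one.trans hp) ε hε
  exact ⟨R₀, hR₀, fun R hR ξ _ hξ => hsmall R hR ξ (le_self_add.trans hξ)⟩
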